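/- In any nondegenerate triangle, the distance from the centroid X2 to the Gergonne point X7 equals twice the distance from X2 to the mittenpunkt X9, i.e., dist(X2, X7) = 2·dist(X2, X9). -/

import Mathlib

/-- The point with normalized barycentric coordinates `(x : y : z)`
with respect to the triangle `A B C`. -/
noncomputable def bary (A B C : EuclideanSpace ℝ (Fin 2)) (x y z : ℝ) :
    EuclideanSpace ℝ (Fin 2) :=
  (x + y + z)⁻¹ • (x • A + y • B + z • C)

/-- The triangle center with barycentric coordinates
`(f a b c : f b c a : f c a b)` where `a, b, c` are the side lengths. -/
noncomputable def tcenter (f : ℝ → ℝ → ℝ → ℝ) (A B C : EuclideanSpace ℝ (Fin 2)) :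
    EuclideanSpace ℝ (Fin 2) :=
  bary A B C (f (dist B C) (dist C A) (dist A B))
    (f (dist C A) (dist A B) (dist B C))
    (f (dist A B) (dist B C) (dist C A))

/-!
The Gergonne point is the image of the mittenpunkt under the homothety of ratio `-2` about the
centroid. Indeed both weight functions have the same cyclic sum, and `X7 + 2 * X9` is, as a weight
function, symmetric in `a, b, c`; hence it puts the same weight on all three vertices. By the
triangle inequality, the common cyclic sum is at least `min a b c * (a + b + c)`, so it is positive.
-/

/-- The triangle center with barycentric weight function `f`, for a triangle in any real normed
space. -/
noncomputable def triangleCenter {E : Type*} [NormedAddCommGroup E] [NormedSpace ℝ E]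
    (f : ℝ → ℝ → ℝ → ℝ) (A B C : E) : E :=
  Finset.univ.centerMass
    ![f (dist B C) (dist C A) (dist A B), f (dist C A) (dist A B) (dist B C),
      f (dist A B) (dist B C) (dist C A)] ![A, B, C]

/-- The barycentric weight function of the Gergonne point `X7`. -/
def gergonneWeight (a b c : ℝ) : ℝ := (a + b - c) * (a - b + c)

/-- The barycentric weight function of the mittenpunkt `X9`. -/
def mittenpunktWeight (a b c : ℝ) : ℝ := a * (b + c - a)

theorem tcenter_eq_triangleCenter (f : ℝ → ℝ → ℝ → ℝ) (A B C : EuclideanSpace ℝ (Fin 2)) :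
    tcenter f A B C = triangleCenter f A B C := by
  simp [tcenter, bary, triangleCenter, Finset.centerMass, Fin.sum_univ_three]

theorem centerMass_eq_homothety_centerMass {k V ι : Type*} [Field k] [AddCommGroup V] [Module k V]
    {t : Finset ι} {u v w : ι → k} {r s : k} (z : ι → V)
    (hwv : ∑ i ∈ t, w i = ∑ i ∈ t, v i) (hv : ∑ i ∈ t, v i ≠ 0) (hu : ∑ i ∈ t, u i ≠ 0)
    (h : ∀ i ∈ t, w i + r * v i = s * u i) :
    t.centerMass w z = AffineMap.homothety (t.centerMass u z) (-r) (t.centerMass v z) := by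
  have hsum : (1 + r) * ∑ i ∈ t, v i = s * ∑ i ∈ t, u i := by
    rw [add_mul, one_mul, Finset.mul_sum, Finset.mul_sum, ← Finset.sum_congr rfl h,
      Finset.sum_add_distrib, hwv]
  have hmoment : ∑ i ∈ t, w i • z i = s • ∑ i ∈ t, u i • z i - r • ∑ i ∈ t, v i • z i := by
    rw [eq_sub_iff_add_eq, Finset.smul_sum, Finset.smul_sum, ← Finset.sum_add_distrib]
    exact Finset.sum_congr rfl fun i hi ↦ by rw [smul_smul, smul_smul, ← add_smul, h i hi]
  have hs : s = (1 + r) * (∑ i ∈ t, v i) * (∑ i ∈ t, u i)⁻¹ := by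
    rw [hsum, mul_inv_cancel_right₀ hu]
  rw [AffineMap.homothety_apply, vsub_eq_sub, vadd_eq_add]
  simp only [Finset.centerMass, hwv, hmoment, hs]
  match_scalars <;> field_simp
  ring

theorem gergonneWeight_add_two_mul_mittenpunktWeight (a b c : ℝ) :
    gergonneWeight a b c + 2 * mittenpunktWeight a b c =
      2 * (a * b + b * c + c * a) - (a ^ 2 + b ^ 2 + c ^ 2) := by
  unfold gergonneWeight mittenpunktWeight
  ring

theorem gergonneWeight_cyclic_sum_eq (a b c : ℝ) :
    gergonneWeight a b c + gergonneWeight b c a + gergonneWeight c a b =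
      mittenpunktWeight a b c + mittenpunktWeight b c a + mittenpunktWeight c a b := by
  unfold gergonneWeight mittenpunktWeight
  ring

theorem mittenpunktWeight_cyclic_sum_pos {a b c : ℝ} (ha : 0 < a) (hb : 0 < b) (hc : 0 < c)
    (habc : a ≤ b + c) (hbca : b ≤ c + a) (hcab : c ≤ a + b) :
    0 < mittenpunktWeight a b c + mittenpunktWeight b c a + mittenpunktWeight c a b := by
  set m := min a (min b c)
  have hm : 0 < m := lt_min ha (lt_min hb hc)
  have hma : m ≤ a := min_le_left _ _
  have hmb : m ≤ b := (min_le_right _ _).trans (min_le_left _ _)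
  have hmc : m ≤ c := (min_le_right _ _).trans (min_le_right _ _)
  calc
    0 < m * (a + b + c) := mul_pos hm (by positivity)
    _ = m * (b + c - a) + m * (c + a - b) + m * (a + b - c) := by ring
    _ ≤ a * (b + c - a) + b * (c + a - b) + c * (a + b - c) := by
      gcongr

theorem dist_triangle_cyclic {P : Type*} [PseudoMetricSpace P] (A B C : P) :
    dist B C ≤ dist C A + dist A B := by
  rw [add_comm, dist_comm A B, dist_comm C A]
  exact dist_triangle B A C

section NormedSpace

variable {E : Type*} [NormedAddCommGroup E] [NormedSpace ℝ E] {A B C : E}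

theorem triangleCenter_gergonneWeight_eq_homothety (hAB : A ≠ B) (hBC : B ≠ C) (hCA : C ≠ A) :
    triangleCenter gergonneWeight A B C =
      AffineMap.homothety (triangleCenter (fun _ _ _ ↦ 1) A B C) (-2 : ℝ)
        (triangleCenter mittenpunktWeight A B C) := by
  have hpos := mittenpunktWeight_cyclic_sum_pos (dist_pos.2 hBC) (dist_pos.2 hCA) (dist_pos.2 hAB)
    (dist_triangle_cyclic A B C) (dist_triangle_cyclic B C A) (dist_triangle_cyclic C A B)
  set a := dist B C
  set b := dist C A
  set c := dist A B
  refine centerMass_eq_homothety_centerMass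
    (s := 2 * (a * b + b * c + c * a) - (a ^ 2 + b ^ 2 + c ^ 2)) _ ?_ ?_ ?_ ?_
  · simpa [Fin.sum_univ_three] using gergonneWeight_cyclic_sum_eq a b c
  · simpa [Fin.sum_univ_three] using hpos.ne'
  · simp only [Fin.sum_univ_three, Matrix.cons_val]
    norm_num
  · intro i _
    fin_cases i
    · simpa using gergonneWeight_add_two_mul_mittenpunktWeight a b c
    · simpa using (gergonneWeight_add_two_mul_mittenpunktWeight b c a).trans (by ring)
    · simpa using (gergonneWeight_add_two_mul_mittenpunktWeight c a b).trans (by ring)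

theorem stmt_4_general (hAB : A ≠ B) (hBC : B ≠ C) (hCA : C ≠ A) :
    dist (triangleCenter (fun _ _ _ ↦ 1) A B C) (triangleCenter gergonneWeight A B C) =
      2 * dist (triangleCenter (fun _ _ _ ↦ 1) A B C) (triangleCenter mittenpunktWeight A B C) := by
  rw [triangleCenter_gergonneWeight_eq_homothety hAB hBC hCA, dist_center_homothety, norm_neg,
    Real.norm_two]

end NormedSpace

theorem stmt_4 (A B C : EuclideanSpace ℝ (Fin 2))
    (h : AffineIndependent ℝ ![A, B, C]) :
    dist (tcenter (fun a b c => (1:Real)) A B C) (tcenter (fun a b c => (a + b - c)*(a - b + c)) A B C) = 2 * dist (tcenter (fun a b c => (1:Real)) A B C) (tcenter (fun a b c => a*(b + c - a)) A B C) := by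
  simp only [tcenter_eq_triangleCenter]
  exact stmt_4_general
    (h.injective.ne (by decide : (0 : Fin 3) ≠ 1)) (h.injective.ne (by decide : (1 : Fin 3) ≠ 2))
    (h.injective.ne (by decide : (2 : Fin 3) ≠ 0))
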